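/- Let C be a monoidal category that is preadditive with tensor product additive in each variable, let (A, η) be a weak ring in C, i.e., η : 𝟙 ⟶ A is such that A ◁ η : A ⟶ A ⊗ A is a split monomorphism, and let z be any object of C. If for some n ≥ 1 the morphism η^{⊗n} ▷ z : 𝟙^{⊗n} ⊗ z ⟶ A^{⊗n} ⊗ z (the n-fold tensor power of η tensored with the identity of z) is the zero morphism, then A ⊗ z is a zero object. -/

import Mathlib

open CategoryTheory CategoryTheory.Limits CategoryTheory.MonoidalCategory

universe v u

variable {C : Type u} [Category.{v} C] [MonoidalCategory C]

/-- The `n`-fold tensor power of an object. -/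
def tpow (A : C) : ℕ → C
  | 0 => 𝟙_ C
  | n + 1 => A ⊗ tpow A n

/-- The `n`-fold tensor power of a morphism. -/
def tpowHom {A B : C} (f : A ⟶ B) : ∀ n : ℕ, tpow A n ⟶ tpow B n
  | 0 => 𝟙 _
  | n + 1 => f ⊗ₘ tpowHom f n

/-!
Write `η^{⊗(n+1)}` as `η ▷ 𝟙^{⊗n}` followed by `A ◁ η^{⊗n}`. Tensored with `A` on the left, the
first factor is a whiskering of the split monomorphism `A ◁ η` and the second splits by induction,
so `A ◁ η^{⊗n}` is a split monomorphism for every `n`. Tensoring with `z` keeps it split, and a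
split monomorphism that is zero has zero source, here `A ⊗ 𝟙^{⊗n} ⊗ z ≅ A ⊗ z`.
-/

instance isSplitMono_comp {D : Type*} [Category* D] {X Y Z : D} (f : X ⟶ Y) (g : Y ⟶ Z)
    [hf : IsSplitMono f] [hg : IsSplitMono g] : IsSplitMono (f ≫ g) :=
  .mk' (hf.exists_splitMono.some.comp hg.exists_splitMono.some)

instance isSplitMono_whiskerLeft (A : C) {X Y : C} (f : X ⟶ Y) [IsSplitMono f] :
    IsSplitMono (A ◁ f) :=
  inferInstanceAs (IsSplitMono ((tensorLeft A).map f))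

instance isSplitMono_whiskerRight {X Y : C} (f : X ⟶ Y) [IsSplitMono f] (Z : C) :
    IsSplitMono (f ▷ Z) :=
  inferInstanceAs (IsSplitMono ((tensorRight Z).map f))

lemma isSplitMono_whiskerLeft_whiskerRight {A X Y : C} (f : X ⟶ Y) [IsSplitMono (A ◁ f)] (Z : C) :
    IsSplitMono (A ◁ f ▷ Z) := by
  rw [whisker_assoc_symm]
  infer_instance

lemma isSplitMono_whiskerLeft_tensorHom {A X Y Z W : C} (f : X ⟶ Y) (g : Z ⟶ W)
    [IsSplitMono (A ◁ f)] [IsSplitMono (Y ◁ g)] : IsSplitMono (A ◁ (f ⊗ₘ g)) := by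
  have := isSplitMono_whiskerLeft_whiskerRight (A := A) f Z
  rw [MonoidalCategory.tensorHom_def, whiskerLeft_comp]
  infer_instance

lemma isSplitMono_whiskerLeft_tpowHom {A X : C} (f : X ⟶ A) [IsSplitMono (A ◁ f)] (n : ℕ) :
    IsSplitMono (A ◁ tpowHom f n) := by
  induction n with
  | zero => exact isSplitMono_whiskerLeft A (𝟙 (𝟙_ C))
  | succ n ih => exact isSplitMono_whiskerLeft_tensorHom f (tpowHom f n)

lemma isZero_tensor_tensor_of_whiskerRight_eq_zero [HasZeroMorphisms C] {A X Y z : C}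
    [(tensorLeft A).PreservesZeroMorphisms] (f : X ⟶ Y) [IsSplitMono (A ◁ f)]
    (hf : f ▷ z = 0) : IsZero (A ⊗ X ⊗ z) := by
  have := isSplitMono_whiskerLeft_whiskerRight (A := A) f z
  have whiskered_eq_zero : A ◁ f ▷ z = 0 := by
    rw [hf]
    exact (tensorLeft A).map_zero _ _
  exact IsZero.of_mono_eq_zero _ whiskered_eq_zero

/-- The canonical isomorphism from a tensor power of the unit object to the unit object, an
iterated left unitor. -/
def tpowUnitIso : ∀ n : ℕ, tpow (𝟙_ C) n ≅ 𝟙_ C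
  | 0 => Iso.refl _
  | n + 1 => λ_ _ ≪≫ tpowUnitIso n

theorem weakRing_tensor_isZero_of_tpowHom_unit_whiskerRight_eq_zero_general
    [HasZeroMorphisms C] {A X z : C} [(tensorLeft A).PreservesZeroMorphisms]
    (f : X ⟶ A) [IsSplitMono (A ◁ f)] {n : ℕ} (hz : tpowHom f n ▷ z = 0) :
    IsZero (A ⊗ tpow X n ⊗ z) :=
  have := isSplitMono_whiskerLeft_tpowHom f n
  isZero_tensor_tensor_of_whiskerRight_eq_zero (tpowHom f n) hz

/-- If `(A, η)` is a weak ring (i.e. `A ◁ η` is a split monomorphism) in a preadditive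
monoidal category with additive tensor, `z` is any object, and for some `n ≥ 1` the
morphism `η^{⊗n} ▷ z` vanishes, then `A ⊗ z` is a zero object. -/
theorem weakRing_tensor_isZero_of_tpowHom_unit_whiskerRight_eq_zero
    [Preadditive C] [MonoidalPreadditive C]
    (A : C) (η : 𝟙_ C ⟶ A) (h : IsSplitMono (A ◁ η)) (z : C)
    (n : ℕ) (hn : 1 ≤ n) (hz : tpowHom η n ▷ z = 0) :
    IsZero (A ⊗ z) := by
  have source_isZero := weakRing_tensor_isZero_of_tpowHom_unit_whiskerRight_eq_zero_general η hz
  exact source_isZero.of_iso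
    (whiskerLeftIso A ((λ_ z).symm ≪≫ whiskerRightIso (tpowUnitIso n).symm z))
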